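/- Let G be a finite undirected multigraph and A an Abelian group. The Abelian group W(V∪E,A) of all balanced functions h:V∪E→A is isomorphic to A^{|V|+con₃(G)−con(G)}, where con₃(G) is the number of 3-edge-connected equivalence classes of vertices and con(G) is the number of connected components of G. -/

import Mathlib

open Finset

/-- A finite undirected multigraph: each edge `e : E` has an unordered pair of
endpoints `ends e : Sym2 V`.  Loops and parallel edges are allowed and the graph
need not be connected. -/
structure Multigraph (V E : Type*) where
  ends : E → Sym2 V

namespace Multigraph

variable {V E : Type*}

/-- `G.IsChain x y p` : `p` is an alternating sequence `v₁,e₁,…,vₙ,eₙ` (encoded as a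
list of vertex-edge pairs) which forms a walk from `x` to `y` (the final vertex `y`
is omitted, i.e. this is "truncated"). -/
def IsChain (G : Multigraph V E) : V → V → List (V × E) → Prop
  | x, y, [] => x = y
  | x, y, (v, e) :: rest => v = x ∧ ∃ w, G.ends e = s(x, w) ∧ G.IsChain w y rest

/-- A truncated trail (ttrail) from `x` to `y`: an alternating walk with no repeated
edges, final vertex omitted. -/
def IsTtrail (G : Multigraph V E) (x y : V) (p : List (V × E)) : Prop :=
  G.IsChain x y p ∧ (p.map Prod.snd).Nodup

/-- A cycle: a closed ttrail with no repeated vertices. -/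
def IsCycle (G : Multigraph V E) (x : V) (p : List (V × E)) : Prop :=
  G.IsTtrail x x p ∧ (p.map Prod.fst).Nodup

/-- Two ttrails are edge-disjoint if they have no common edges. -/
def EdgeDisjoint (p q : List (V × E)) : Prop :=
  ∀ e, e ∈ p.map Prod.snd → e ∉ q.map Prod.snd

/-- `k`-edge-connectivity: two distinct vertices are `k`-edge-connected if there are
`k` pairwise edge-disjoint ttrails between them; every vertex is `k`-edge-connected
to itself. -/
def KConn (G : Multigraph V E) (k : ℕ) (v w : V) : Prop :=
  v = w ∨ ∃ p : Fin k → List (V × E),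
    (∀ i, G.IsTtrail v w (p i)) ∧ ∀ i j, i ≠ j → EdgeDisjoint (p i) (p j)

/-- `conk G k` : the number of equivalence classes of `k`-edge-connected vertices. -/
noncomputable def conk (G : Multigraph V E) (k : ℕ) : ℕ :=
  Nat.card (Quotient (Relation.EqvGen.setoid (G.KConn k)))

/-- The number of connected components of `G`. -/
noncomputable def con (G : Multigraph V E) : ℕ := G.conk 1

section Homology

variable [Fintype V] [Fintype E] [DecidableEq V] [DecidableEq E]

/-- The vector in `F₂^V` which is the sum of the two endpoints of the edge `e`
(so a loop is sent to `0`). -/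
def edgeVec (G : Multigraph V E) (e : E) : V → ZMod 2 := fun v =>
  Sym2.lift ⟨fun a b => (if v = a then (1 : ZMod 2) else 0) + (if v = b then 1 else 0),
    fun _ _ => add_comm _ _⟩ (G.ends e)

/-- The boundary map `δ : F₂^E → F₂^V`, sending each edge to the sum of its two
adjacent vertices. -/
def boundary (G : Multigraph V E) : (E → ZMod 2) →ₗ[ZMod 2] (V → ZMod 2) where
  toFun c := fun v => ∑ e, c e * G.edgeVec e v
  map_add' c d := by
    funext v
    simp [add_mul, Finset.sum_add_distrib]
  map_smul' r c := by
    funext v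
    simp [Finset.mul_sum, mul_assoc]

/-- The Cycle Space of `G` : the kernel of the boundary map. -/
def cycleSpace (G : Multigraph V E) : Submodule (ZMod 2) (E → ZMod 2) :=
  LinearMap.ker G.boundary

/-- The indicator vector of a vertex in `F₂^V`. -/
def vert (v : V) : V → ZMod 2 := fun w => if w = v then 1 else 0

/-- A `k`-weak homological cycle: a homological path between two `k`-edge-connected
vertices. -/
def IsWeakCycle (G : Multigraph V E) (k : ℕ) (c : E → ZMod 2) : Prop :=
  ∃ v w, G.KConn k v w ∧ G.boundary c = vert v + vert w

/-- The `k`-Weak Cycle Space: the span of all `k`-weak homological cycles. -/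
def weakCycleSpace (G : Multigraph V E) (k : ℕ) : Submodule (ZMod 2) (E → ZMod 2) :=
  Submodule.span (ZMod 2) {c | G.IsWeakCycle k c}

/-- `eps p` : the set of edges of the ttrail `p`, as a vector in `F₂^E`. -/
def eps (p : List (V × E)) : E → ZMod 2 := fun e => if e ∈ p.map Prod.snd then 1 else 0

/-- The `F₂`-linear extension of `f : E → A` to subsets of `E`: the sum of `f` over
the edges of the subset `S`. -/
def fSum {A : Type*} [AddCommGroup A] (f : E → A) (S : E → ZMod 2) : A :=
  ∑ e ∈ Finset.univ.filter fun e => S e = 1, f e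

end Homology

section Balanced

variable {A : Type*} [AddCommGroup A]

/-- The sum `g(v₁)+f(e₁)+…+g(vₙ)+f(eₙ)` of the values of a vertex-function `g` and an
edge-function `f` along a ttrail `v₁,e₁,…,vₙ,eₙ`. -/
def pathSum (g : V → A) (f : E → A) (p : List (V × E)) : A :=
  (p.map fun ve => g ve.1 + f ve.2).sum

/-- The sum `h(v₁)+h(e₁)+…+h(vₙ)+h(eₙ)` of the values of `h : V ∪ E → A` along a
ttrail `v₁,e₁,…,vₙ,eₙ`. -/
def wSum (h : V ⊕ E → A) (p : List (V × E)) : A :=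
  (p.map fun ve => h (Sum.inl ve.1) + h (Sum.inr ve.2)).sum

lemma pathSum_cons (g : V → A) (f : E → A) (a : V × E) (t : List (V × E)) :
    pathSum g f (a :: t) = (g a.1 + f a.2) + pathSum g f t := by
  simp [pathSum]

lemma pathSum_zero (p : List (V × E)) : pathSum (0 : V → A) (0 : E → A) p = 0 := by
  induction p with
  | nil => simp [pathSum]
  | cons a t ih => simp [pathSum_cons, ih]

lemma pathSum_add (g g' : V → A) (f f' : E → A) (p : List (V × E)) :
    pathSum (g + g') (f + f') p = pathSum g f p + pathSum g' f' p := by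
  induction p with
  | nil => simp [pathSum]
  | cons a t ih => simp only [pathSum_cons, Pi.add_apply, ih]; abel

lemma pathSum_neg (g : V → A) (f : E → A) (p : List (V × E)) :
    pathSum (-g) (-f) p = -pathSum g f p := by
  induction p with
  | nil => simp [pathSum]
  | cons a t ih => simp only [pathSum_cons, Pi.neg_apply, ih]; abel

lemma wSum_cons (h : V ⊕ E → A) (a : V × E) (t : List (V × E)) :
    wSum h (a :: t) = (h (Sum.inl a.1) + h (Sum.inr a.2)) + wSum h t := by
  simp [wSum]

lemma wSum_zero (p : List (V × E)) : wSum (0 : V ⊕ E → A) p = 0 := by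
  induction p with
  | nil => simp [wSum]
  | cons a t ih => simp [wSum_cons, ih]

lemma wSum_add (h h' : V ⊕ E → A) (p : List (V × E)) :
    wSum (h + h') p = wSum h p + wSum h' p := by
  induction p with
  | nil => simp [wSum]
  | cons a t ih => simp only [wSum_cons, Pi.add_apply, ih]; abel

lemma wSum_neg (h : V ⊕ E → A) (p : List (V × E)) :
    wSum (-h) p = -wSum h p := by
  induction p with
  | nil => simp [wSum]
  | cons a t ih => simp only [wSum_cons, Pi.neg_apply, ih]; abel

/-- A function `f : E → A` is balanced if the sum of its values along every closed
ttrail of `G` is zero. -/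
def BalancedE (G : Multigraph V E) (f : E → A) : Prop :=
  ∀ x p, G.IsTtrail x x p → pathSum (0 : V → A) f p = 0

/-- A function `g : V → A` is balanceable if some `f : E → A` balances it, i.e. the
sum of the values of `g` and `f` along every closed ttrail of `G` is zero. -/
def Balanceable (G : Multigraph V E) (g : V → A) : Prop :=
  ∃ f : E → A, ∀ x p, G.IsTtrail x x p → pathSum g f p = 0

/-- A function `h : V ∪ E → A` is balanced if the sum of its values along every
closed ttrail of `G` is zero. -/
def BalancedW (G : Multigraph V E) (h : V ⊕ E → A) : Prop :=
  ∀ x p, G.IsTtrail x x p → wSum h p = 0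

/-- `H(E,A)` : the group of balanced functions from `E` to `A`. -/
def Hgroup (G : Multigraph V E) (A : Type*) [AddCommGroup A] : AddSubgroup (E → A) where
  carrier := {f | G.BalancedE f}
  zero_mem' := fun _ p _ => pathSum_zero p
  add_mem' := by
    intro f f' hf hf' x p hp
    have h := pathSum_add (0 : V → A) 0 f f' p
    rw [add_zero] at h
    rw [h, hf x p hp, hf' x p hp, add_zero]
  neg_mem' := by
    intro f hf x p hp
    have h := pathSum_neg (0 : V → A) f p
    rw [neg_zero] at h
    rw [h, hf x p hp, neg_zero]

/-- `B(V,A)` : the group of balanceable functions from `V` to `A`. -/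
def Bgroup (G : Multigraph V E) (A : Type*) [AddCommGroup A] : AddSubgroup (V → A) where
  carrier := {g | G.Balanceable g}
  zero_mem' := ⟨0, fun _ p _ => pathSum_zero p⟩
  add_mem' := by
    rintro g g' ⟨f, hf⟩ ⟨f', hf'⟩
    exact ⟨f + f', fun x p hp => by rw [pathSum_add, hf x p hp, hf' x p hp, add_zero]⟩
  neg_mem' := by
    rintro g ⟨f, hf⟩
    exact ⟨-f, fun x p hp => by rw [pathSum_neg, hf x p hp, neg_zero]⟩

/-- `W(V ∪ E, A)` : the group of balanced functions from `V ∪ E` to `A`. -/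
def Wgroup (G : Multigraph V E) (A : Type*) [AddCommGroup A] : AddSubgroup (V ⊕ E → A) where
  carrier := {h | G.BalancedW h}
  zero_mem' := fun _ p _ => wSum_zero p
  add_mem' := by
    intro h h' hh hh' x p hp
    rw [wSum_add, hh x p hp, hh' x p hp, add_zero]
  neg_mem' := by
    intro h hh x p hp
    rw [wSum_neg, hh x p hp, neg_zero]

end Balanced

/-- A `3`-weakly closed ttrail (a ttrail between `3`-edge-connected vertices) which is
short: no inner vertex is `3`-edge-connected to the initial vertex. -/
def ShortW (G : Multigraph V E) (x y : V) (p : List (V × E)) : Prop :=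
  G.IsTtrail x y p ∧ G.KConn 3 x y ∧ ∀ v ∈ (p.map Prod.fst).tail, ¬ G.KConn 3 v x

/-- `G.ShortChain x y L` : `L` is a list of nontrivial short `3`-weakly closed ttrails
which concatenate into a ttrail from `x` to `y`. -/
def ShortChain (G : Multigraph V E) : V → V → List (List (V × E)) → Prop
  | x, y, [] => x = y
  | x, y, s :: rest => s ≠ [] ∧ ∃ z, G.ShortW x z s ∧ G.ShortChain z y rest

/-- `A₂` : the subgroup of elements of order dividing `2` in `A`. -/
def torsion2 (A : Type*) [AddCommGroup A] : AddSubgroup A where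
  carrier := {a | 2 • a = 0}
  zero_mem' := by simp
  add_mem' := by
    intro a b ha hb
    simp only [Set.mem_setOf_eq] at *
    rw [smul_add, ha, hb, add_zero]
  neg_mem' := by
    intro a ha
    simp only [Set.mem_setOf_eq] at *
    rw [smul_neg, ha, neg_zero]

/-- `2A` : the image of the doubling map `a ↦ 2a`. -/
def double2 (A : Type*) [AddCommGroup A] : AddSubgroup A where
  carrier := {b | ∃ a, b = 2 • a}
  zero_mem' := ⟨0, by simp⟩
  add_mem' := by
    rintro a b ⟨x, rfl⟩ ⟨y, rfl⟩
    exact ⟨x + y, by rw [smul_add]⟩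
  neg_mem' := by
    rintro a ⟨x, rfl⟩
    exact ⟨-x, by rw [smul_neg]⟩

end Multigraph

namespace Multigraph

variable {V E : Type*} [Fintype V] [Fintype E] [DecidableEq V] [DecidableEq E]

/-!
Balanced functions are the functions orthogonal to the lattice `L ⊆ ℤ^(V ∪ E)` spanned by the closed
ttrails, i.e. the homomorphisms `ℤ^(V ∪ E) / L → A`. It therefore suffices that `L` is saturated and
has rank `|E| + con - con₃`.

Call two edges equivalent if no element of the cycle space `C ⊆ F₂^E` separates them, and let `U(R)`
be the functions `E → R` that vanish on bridges and are constant on classes of nonbridges. The rank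
of `U(R)` is the number of classes. Over `F₂`, the boundary map sends `U` onto the span of the sums
`v + w` of 3-edge-connected vertices, with kernel `C`:
* three edge-disjoint ttrails `p`, `q`, `r` from `v` to `w` give `p = (p + q)(p + r)`, a product of
  two elements of `C`, hence an element of `U`;
* conversely the boundary of an element of `U` is even on each side of every cut of nonbridges of
  size at most two, so by uncrossing two vertices of its support lie on the same side of each such
  cut, and they are 3-edge-connected by Menger's theorem.

Counting dimensions gives the number of classes, `|E| + con - con₃`, and the first point also shows
that `U(F₂)` is spanned by products `XY` with `X`, `Y` in `C`. For the `0`-`1` lifts to `ℤ^E`,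
`2XY = X + Y - (X + Y mod 2)`, so `U(ℤ) ⊆ N + 2 U(ℤ)` where `N` consists of the `y` for which `2y`
lies in the span `S` of the lifts of `C`. Fourier inversion on `C` gives `|C| U(ℤ) ⊆ S`, and `|C|`
is a power of two, so `2 U(ℤ) ⊆ S`. The vertex part of a closed ttrail is determined by its
edge part, twice the former being the degree vector of the latter, and it follows that `L` consists
of all integral `(x, y)` with `y ∈ U(ℤ)` and `2x = degree y`, which is saturated and has
the rank of `U(ℤ)`.
-/

section Orthogonal

variable {ι : Type*} [Fintype ι] (A : Type*) [AddCommGroup A]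

/-- The functions `h : ι → A` orthogonal to an integral lattice `L ⊆ ℤ^ι` under the pairing
`(l, h) ↦ ∑ i, l i • h i`. -/
def orthogonal (L : Submodule ℤ (ι → ℤ)) : AddSubgroup (ι → A) where
  carrier := {h | ∀ l ∈ L, ∑ i, l i • h i = 0}
  zero_mem' l _ := by simp
  add_mem' hg hh l hl := by simp [Finset.sum_add_distrib, hg l hl, hh l hl]
  neg_mem' hh l hl := by simp [hh l hl]

variable {A} in
lemma mem_orthogonal {L : Submodule ℤ (ι → ℤ)} {h : ι → A} :
    h ∈ orthogonal A L ↔ ∀ l ∈ L, ∑ i, l i • h i = 0 :=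
  Iff.rfl

lemma range_mkQ_comp_eq_orthogonal (L : Submodule ℤ (ι → ℤ)) :
    ((Module.piEquiv ι ℤ A).symm.toLinearMap ∘ₗ
      LinearMap.lcomp ℤ A L.mkQ).toAddMonoidHom.range = orthogonal A L := by
  ext h
  rw [mem_orthogonal]
  constructor
  · rintro ⟨φ, rfl⟩ l hl
    calc _ = Module.piEquiv ι ℤ A ((Module.piEquiv ι ℤ A).symm (φ ∘ₗ L.mkQ)) l :=
          (Module.piEquiv_apply_apply ..).symm
      _ = 0 := by simp [(Submodule.Quotient.mk_eq_zero L).2 hl]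
  · intro hh
    have hker : L ≤ LinearMap.ker (Module.piEquiv ι ℤ A h) := fun l hl => by
      rw [LinearMap.mem_ker, Module.piEquiv_apply_apply]
      exact hh l hl
    refine ⟨L.liftQ _ hker, (Module.piEquiv ι ℤ A).symm_apply_eq.2 ?_⟩
    exact Submodule.liftQ_mkQ L _ hker

/-- Functions orthogonal to `L` are the same as homomorphisms out of `ℤ^ι ⧸ L`. -/
noncomputable def homQuotientEquivOrthogonal (L : Submodule ℤ (ι → ℤ)) :
    (((ι → ℤ) ⧸ L) →ₗ[ℤ] A) ≃+ orthogonal A L :=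
  (AddMonoidHom.ofInjective <| (Module.piEquiv ι ℤ A).symm.injective.comp
    (LinearMap.lcomp_injective_of_surjective L.mkQ L.mkQ_surjective)).trans
    (AddEquiv.addSubgroupCongr (range_mkQ_comp_eq_orthogonal A L))

lemma isTorsionFree_quotient_of_saturated {R M : Type*} [CommRing R] [IsDomain R]
    [AddCommGroup M] [Module R M] {L : Submodule R M}
    (hL : ∀ (r : R) (x : M), r ≠ 0 → r • x ∈ L → x ∈ L) : Module.IsTorsionFree R (M ⧸ L) := by
  refine Module.IsTorsionFree.of_smul_eq_zero fun r q hq => or_iff_not_imp_left.2 fun hr => ?_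
  obtain ⟨x, rfl⟩ := L.mkQ_surjective q
  rw [← map_smul, Submodule.mkQ_apply, Submodule.Quotient.mk_eq_zero] at hq
  exact (Submodule.Quotient.mk_eq_zero L).2 (hL r x hr hq)

theorem nonempty_orthogonal_equiv {L : Submodule ℤ (ι → ℤ)}
    (hL : ∀ (n : ℤ) (x : ι → ℤ), n ≠ 0 → n • x ∈ L → x ∈ L) :
    Nonempty (orthogonal A L ≃+ (Fin (Fintype.card ι - Module.finrank ℤ L) → A)) := by
  have := isTorsionFree_quotient_of_saturated hL
  have hrank : Module.finrank ℤ ((ι → ℤ) ⧸ L) = Fintype.card ι - Module.finrank ℤ L := by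
    rw [← Module.finrank_fintype_fun_eq_card ℤ, ← L.finrank_quotient_add_finrank,
      Nat.add_sub_cancel]
  let b := Module.finBasisOfFinrankEq ℤ ((ι → ℤ) ⧸ L) hrank
  exact ⟨(homQuotientEquivOrthogonal A L).symm.trans (b.constr ℤ).symm.toAddEquiv⟩

end Orthogonal

section TwoAdic

variable {R M : Type*} [CommRing R] [AddCommGroup M] [Module R M]

lemma le_of_le_sup_smul_of_pow_smul_mem {U N : Submodule R M} (a : R) (n : ℕ)
    (hU : ∀ x ∈ U, ∃ y ∈ N, ∃ z ∈ U, x = y + a • z) (hn : ∀ x ∈ U, a ^ n • x ∈ N) : U ≤ N := by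
  induction n with
  | zero => exact fun x hx => by simpa using hn x hx
  | succ n ih =>
    refine ih fun x hx => ?_
    obtain ⟨y, hy, z, hz, rfl⟩ := hU x hx
    rw [smul_add, smul_smul, ← pow_succ]
    exact N.add_mem (N.smul_mem _ hy) (hn z hz)

end TwoAdic

section RelSpan

variable {V : Type*} [DecidableEq V]

lemma vert_eq_single (v : V) : vert v = Pi.single v (1 : ZMod 2) := by
  ext w
  rw [vert, Pi.single_apply]

/-- The subspace of `F₂^V` spanned by the sums of two `r`-related vertices. -/
def relSpan (r : V → V → Prop) : Submodule (ZMod 2) (V → ZMod 2) :=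
  Submodule.span (ZMod 2) {x | ∃ v w, r v w ∧ x = vert v + vert w}

lemma vert_add_vert_mem_relSpan {r : V → V → Prop} {v w : V} (h : r v w) :
    vert v + vert w ∈ relSpan r :=
  Submodule.subset_span ⟨v, w, h, rfl⟩

lemma vert_add_vert_mem_relSpan_of_eqvGen {r : V → V → Prop} {v w : V}
    (h : Relation.EqvGen r v w) : vert v + vert w ∈ relSpan r := by
  induction h with
  | rel v w h => exact vert_add_vert_mem_relSpan h
  | refl v => rw [ZModModule.add_self]; exact zero_mem _
  | symm v w _ ih => rwa [add_comm]
  | trans u v w _ _ ih₁ ih₂ =>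
    rw [← ZModModule.add_add_add_cancel (vert u) (vert v) (vert w)]
    exact add_mem ih₁ ih₂

/-- The linear map `F₂^(V/s) → F₂^V` placing the value of each class at its chosen
representative; a section of `classSum s`. -/
noncomputable def classLift (s : Setoid V) [Fintype (Quotient s)] :
    (Quotient s → ZMod 2) →ₗ[ZMod 2] (V → ZMod 2) :=
  Fintype.linearCombination (ZMod 2) fun q => vert q.out

lemma classLift_single (s : Setoid V) [Fintype (Quotient s)] [DecidableEq (Quotient s)]
    (q : Quotient s) : classLift s (Pi.single q 1) = vert q.out := by
  rw [classLift, Fintype.linearCombination_apply_single, one_smul]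

variable [Fintype V]

open scoped Classical in
/-- The linear map `F₂^V → F₂^(V/s)` summing over the classes of `s`. -/
noncomputable def classSum (s : Setoid V) : (V → ZMod 2) →ₗ[ZMod 2] (Quotient s → ZMod 2) :=
  Fintype.linearCombination (ZMod 2) fun v => Pi.single (Quotient.mk s v) 1

open scoped Classical in
lemma classSum_vert (s : Setoid V) (v : V) :
    classSum s (vert v) = Pi.single (Quotient.mk s v) 1 := by
  rw [vert_eq_single, classSum, Fintype.linearCombination_apply_single, one_smul]

lemma classSum_comp_classLift (s : Setoid V) [Fintype (Quotient s)] :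
    classSum s ∘ₗ classLift s = LinearMap.id := by
  classical
  ext1 q
  ext1
  simp [classLift_single, classSum_vert]

lemma add_classLift_classSum_mem_relSpan (r : V → V → Prop)
    [Fintype (Quotient (Relation.EqvGen.setoid r))] (x : V → ZMod 2) :
    x + classLift (Relation.EqvGen.setoid r) (classSum _ x) ∈ relSpan r := by
  classical
  let D : (V → ZMod 2) →ₗ[ZMod 2] (V → ZMod 2) :=
    LinearMap.id + classLift (Relation.EqvGen.setoid r) ∘ₗ classSum _
  change D x ∈ relSpan r
  rw [pi_eq_sum_univ' x, map_sum]
  refine sum_mem fun v _ => ?_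
  rw [map_smul]
  refine Submodule.smul_mem _ _ ?_
  have hD : D (Pi.single v 1) = vert v + vert (Quotient.mk (Relation.EqvGen.setoid r) v).out := by
    rw [← vert_eq_single]
    simp [D, classSum_vert, classLift_single]
  rw [hD]
  exact vert_add_vert_mem_relSpan_of_eqvGen ((Relation.EqvGen.setoid r).symm (Quotient.mk_out v))

lemma ker_classSum (r : V → V → Prop) :
    LinearMap.ker (classSum (Relation.EqvGen.setoid r)) = relSpan r := by
  classical
  refine le_antisymm (fun x hx => ?_) (Submodule.span_le.2 ?_)
  · simpa [LinearMap.mem_ker.1 hx] using add_classLift_classSum_mem_relSpan r x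
  · rintro _ ⟨v, w, h, rfl⟩
    have hvw : (Quotient.mk (Relation.EqvGen.setoid r) v) = Quotient.mk _ w :=
      Quotient.sound (Relation.EqvGen.rel _ _ h)
    rw [SetLike.mem_coe, LinearMap.mem_ker, map_add, classSum_vert, classSum_vert, hvw,
      ZModModule.add_self]

theorem finrank_relSpan_add_card_quotient (r : V → V → Prop) :
    Module.finrank (ZMod 2) (relSpan r) + Nat.card (Quotient (Relation.EqvGen.setoid r)) =
      Fintype.card V := by
  classical
  have hsurj : Function.Surjective (classSum (Relation.EqvGen.setoid r)) :=
    LinearMap.surjective_of_comp_eq_id _ _ (classSum_comp_classLift _)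
  rw [← ker_classSum, Nat.card_eq_fintype_card, ← Module.finrank_fintype_fun_eq_card (ZMod 2),
    ← (LinearMap.quotKerEquivOfSurjective _ hsurj).finrank_eq, add_comm,
    Submodule.finrank_quotient_add_finrank, Module.finrank_fintype_fun_eq_card]

end RelSpan

section Cut

variable {V E : Type*} (G : Multigraph V E)

lemma exists_ends_eq (e : E) : ∃ a b, G.ends e = s(a, b) := by
  induction h : G.ends e with
  | _ a b => exact ⟨a, b, rfl⟩

open scoped Classical in
/-- The edges of `F` with one end in `T` and the other end outside `T`. -/
noncomputable def cut (F : Finset E) (T : Finset V) : Finset E :=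
  {e ∈ F | (∃ a ∈ G.ends e, a ∈ T) ∧ ∃ b ∈ G.ends e, b ∉ T}

variable {G}

lemma mem_cut {F : Finset E} {T : Finset V} {e : E} {a b : V} (he : G.ends e = s(a, b)) :
    e ∈ G.cut F T ↔ e ∈ F ∧ ¬(a ∈ T ↔ b ∈ T) := by
  simp only [cut, mem_filter, he, Sym2.mem_iff, exists_eq_or_imp, exists_eq_left]
  tauto

lemma cut_subset {F : Finset E} {T : Finset V} : G.cut F T ⊆ F := by
  classical exact filter_subset _ _

lemma cut_empty (T : Finset V) : G.cut ∅ T = ∅ := rfl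

lemma cut_univ [Fintype V] (F : Finset E) : G.cut F univ = ∅ := by simp [cut]

lemma cut_compl [Fintype V] [DecidableEq V] (F : Finset E) (T : Finset V) :
    G.cut F Tᶜ = G.cut F T := by
  ext e
  obtain ⟨a, b, hab⟩ := G.exists_ends_eq e
  simp only [mem_cut hab, mem_compl, not_iff_not]

open scoped Classical in
lemma card_cut (F : Finset E) (T : Finset V) :
    #(G.cut F T) = ∑ e ∈ F, if e ∈ G.cut F T then 1 else 0 := by
  rw [← card_filter, filter_mem_eq_inter, inter_eq_right.2 cut_subset]

theorem card_cut_inter_add_card_cut_union_le [DecidableEq V] (F : Finset E) (S T : Finset V) :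
    #(G.cut F (S ∩ T)) + #(G.cut F (S ∪ T)) ≤ #(G.cut F S) + #(G.cut F T) := by
  classical
  simp only [card_cut, ← sum_add_distrib]
  refine sum_le_sum fun e he => ?_
  obtain ⟨a, b, hab⟩ := G.exists_ends_eq e
  simp only [mem_cut hab, he, true_and, mem_inter, mem_union]
  by_cases a ∈ S <;> by_cases a ∈ T <;> by_cases b ∈ S <;> by_cases b ∈ T <;> simp [*]

lemma cut_insert_of_mem_iff_mem [DecidableEq E] {F : Finset E} {T : Finset V} {e : E} {a b : V}
    (he : G.ends e = s(a, b)) (hT : a ∈ T ↔ b ∈ T) : G.cut (insert e F) T = G.cut F T := by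
  classical
  have hcross : ¬((∃ a ∈ G.ends e, a ∈ T) ∧ ∃ b ∈ G.ends e, b ∉ T) := by
    simp [he, hT]
  rw [cut, filter_insert, if_neg hcross, cut]

lemma card_cut_insert_le [DecidableEq E] (F : Finset E) (T : Finset V) (e : E) :
    #(G.cut (insert e F) T) ≤ #(G.cut F T) + 1 := by
  classical
  rw [cut, filter_insert]
  split_ifs
  · exact card_insert_le _ _
  · exact Nat.le_succ _

variable [DecidableEq V]

lemma edgeVec_eq {e : E} {a b : V} (he : G.ends e = s(a, b)) : G.edgeVec e = vert a + vert b := by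
  ext v
  simp [edgeVec, he, vert]

lemma sum_vert (T : Finset V) (a : V) : ∑ v ∈ T, vert a v = if a ∈ T then 1 else 0 := by
  simp [vert]

open scoped Classical in
lemma sum_edgeVec [Fintype E] (T : Finset V) (e : E) :
    ∑ v ∈ T, G.edgeVec e v = if e ∈ G.cut univ T then 1 else 0 := by
  obtain ⟨a, b, hab⟩ := G.exists_ends_eq e
  simp only [edgeVec_eq hab, Pi.add_apply, sum_add_distrib, sum_vert, mem_cut hab]
  by_cases a ∈ T <;> by_cases b ∈ T <;> simp [*, CharTwo.add_self_eq_zero]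

theorem sum_boundary [Fintype E] {F : Finset E} {c : E → ZMod 2} (hc : ∀ e ∉ F, c e = 0)
    (T : Finset V) : ∑ v ∈ T, G.boundary c v = ∑ e ∈ G.cut F T, c e := by
  classical
  have hcut : G.cut F T = F ∩ G.cut univ T := by
    ext e
    simp [cut]
  calc ∑ v ∈ T, G.boundary c v = ∑ e, c e * ∑ v ∈ T, G.edgeVec e v := by
        simp only [boundary, LinearMap.coe_mk, AddHom.coe_mk, mul_sum]
        exact sum_comm
    _ = ∑ e ∈ G.cut univ T, c e := by simp [sum_edgeVec]
    _ = ∑ e ∈ G.cut F T, c e := (sum_subset (hcut ▸ inter_subset_right) fun e he heF =>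
        hc e fun h => heF (hcut ▸ mem_inter.2 ⟨h, he⟩)).symm

end Cut

section Flow

variable {V E : Type*} {G : Multigraph V E}

variable (G) in
/-- `o` orients each edge of `D` from its end `(o e).1` to its end `(o e).2`; its values outside
`D` are irrelevant. -/
def IsOrientation (o : E → V × V) (D : Finset E) : Prop :=
  ∀ e ∈ D, G.ends e = s((o e).1, (o e).2)

lemma IsOrientation.insert_update [DecidableEq E] {o : E → V × V} {D : Finset E}
    (ho : G.IsOrientation o D) {e : E} {x y : V} (he : G.ends e = s(x, y)) :
    G.IsOrientation (Function.update o e (x, y)) (insert e D) := by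
  intro f hf
  by_cases hfe : f = e
  · rw [hfe, Function.update_self, he]
  · rw [Function.update_of_ne hfe]
    exact ho f (mem_of_mem_insert_of_ne hf hfe)

lemma exists_ends_eq_of_card_cut_lt [DecidableEq E] {F : Finset E} {e : E} {T : Finset V} {n : ℤ}
    (hlt : #(G.cut F T) < n) (hle : n ≤ #(G.cut (insert e F) T)) :
    ∃ x y, G.ends e = s(x, y) ∧ x ∈ T ∧ y ∉ T := by
  obtain ⟨x, y, he⟩ := G.exists_ends_eq e
  by_cases hxy : x ∈ T ↔ y ∈ T
  · rw [cut_insert_of_mem_iff_mem he hxy] at hle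
    omega
  · by_cases hx : x ∈ T
    · exact ⟨x, y, he, hx, by tauto⟩
    · exact ⟨y, x, he.trans Sym2.eq_swap, by tauto, hx⟩

lemma IsTtrail.cons {e : E} {x y w : V} {p : List (V × E)} (hp : G.IsTtrail y w p)
    (he : G.ends e = s(x, y)) (hep : e ∉ p.map Prod.snd) : G.IsTtrail x w ((x, e) :: p) :=
  ⟨⟨rfl, y, he, hp.1⟩, List.nodup_cons.2 ⟨hep, hp.2⟩⟩

variable (G) in
/-- A family of pairwise edge-disjoint ttrails `p i` from `x i` to `w`, all contained in `D`. -/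
structure IsDisjointTrails {ι : Type*} (D : Finset E) (x : ι → V) (w : V)
    (p : ι → List (V × E)) : Prop where
  isTtrail (i : ι) : G.IsTtrail (x i) w (p i)
  mem {i : ι} {e : E} : e ∈ (p i).map Prod.snd → e ∈ D
  edgeDisjoint (i j : ι) : i ≠ j → EdgeDisjoint (p i) (p j)

lemma IsDisjointTrails.update_cons {ι : Type*} [DecidableEq ι] [DecidableEq E] {D : Finset E}
    {x : ι → V} {w y : V} {i : ι} {e : E} {p : ι → List (V × E)} (heD : e ∈ D)
    (he : G.ends e = s(x i, y))
    (hp : G.IsDisjointTrails (D.erase e) (Function.update x i y) w p) :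
    G.IsDisjointTrails D x w (Function.update p i ((x i, e) :: p i)) := by
  have hep (j : ι) : e ∉ (p j).map Prod.snd := fun h => notMem_erase e D (hp.mem h)
  have mem_update {j : ι} {f : E}
      (hf : f ∈ (Function.update p i ((x i, e) :: p i) j).map Prod.snd) :
      j = i ∧ f = e ∨ f ∈ (p j).map Prod.snd := by
    obtain rfl | hj := eq_or_ne j i
    · simpa only [Function.update_self, List.map_cons, List.mem_cons, true_and] using hf
    · rw [Function.update_of_ne hj] at hf
      exact .inr hf
  refine ⟨fun j => ?_, fun {j f} hf => ?_, fun j l hjl f hfj hfl => ?_⟩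
  · have hpj := hp.isTtrail j
    obtain rfl | hj := eq_or_ne j i
    · rw [Function.update_self] at hpj ⊢
      exact hpj.cons he (hep j)
    · rwa [Function.update_of_ne hj] at hpj ⊢
  · rcases mem_update hf with ⟨-, rfl⟩ | hf
    exacts [heD, mem_of_mem_erase (hp.mem hf)]
  · rcases mem_update hfj with ⟨hji, hfe⟩ | hpj <;> rcases mem_update hfl with ⟨hli, hfe'⟩ | hpl
    · exact hjl (hji.trans hli.symm)
    · exact hep l (hfe ▸ hpl)
    · exact hep j (hfe' ▸ hpj)
    · exact hp.edgeDisjoint j l hjl f hpj hpl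

variable [DecidableEq V]

/-- Outdegree minus indegree in the digraph with edge set `D` oriented by `o`. -/
def divergence (o : E → V × V) (D : Finset E) : V → ℤ :=
  ∑ e ∈ D, (Pi.single (o e).1 1 - Pi.single (o e).2 1)

lemma sum_single_one (T : Finset V) (a : V) :
    ∑ v ∈ T, (Pi.single a 1 : V → ℤ) v = if a ∈ T then 1 else 0 := by
  simp [Pi.single_apply]

lemma divergence_insert_update [DecidableEq E] {o : E → V × V} {D : Finset E} {e : E}
    (he : e ∉ D) (x y : V) :
    divergence (Function.update o e (x, y)) (insert e D) =
      Pi.single x 1 - Pi.single y 1 + divergence o D := by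
  rw [divergence, sum_insert he, Function.update_self]
  refine congrArg _ (sum_congr rfl fun f hf => ?_)
  rw [Function.update_of_ne (ne_of_mem_of_not_mem hf he)]

lemma sum_sub_single_add_single_le_card_cut [DecidableEq E] {F : Finset E} {e : E} {x y : V}
    (he : G.ends e = s(x, y)) {a : V → ℤ} (ha : ∀ T, ∑ v ∈ T, a v ≤ #(G.cut (insert e F) T))
    {T₀ : Finset V} (hT₀ : #(G.cut F T₀) < ∑ v ∈ T₀, a v) (hx : x ∈ T₀) (hy : y ∉ T₀)
    (T : Finset V) :
    ∑ v ∈ T, (a - (Pi.single x 1 - Pi.single y 1) : V → ℤ) v ≤ #(G.cut F T) := by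
  have hle (S : Finset V) : ∑ v ∈ S, a v ≤ #(G.cut F S) + 1 :=
    (ha S).trans (mod_cast card_cut_insert_le F S e)
  have hle_of_iff {S : Finset V} (hS : x ∈ S ↔ y ∈ S) : ∑ v ∈ S, a v ≤ #(G.cut F S) :=
    cut_insert_of_mem_iff_mem he hS ▸ ha S
  simp only [Pi.sub_apply, sum_sub_distrib, sum_single_one]
  by_cases hxT : x ∈ T <;> by_cases hyT : y ∈ T
  · simpa [hxT, hyT] using hle_of_iff (by simp [hxT, hyT])
  · simpa [hxT, hyT] using hle T
  · have hinter := hle_of_iff (S := T ∩ T₀) (by simp [hxT, hy])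
    have hunion := hle_of_iff (S := T ∪ T₀) (by simp [hyT, hx])
    have hsum := sum_union_inter (s₁ := T) (s₂ := T₀) (f := a)
    have hsub : (#(G.cut F (T ∩ T₀)) + #(G.cut F (T ∪ T₀)) : ℤ) ≤ #(G.cut F T) + #(G.cut F T₀) :=
      mod_cast card_cut_inter_add_card_cut_union_le F T T₀
    simp only [hxT, hyT, if_true, if_false]
    linarith
  · simpa [hxT, hyT] using hle_of_iff (by simp [hxT, hyT])

theorem exists_divergence_eq_of_sum_le_card_cut [Fintype V] (F : Finset E) {a : V → ℤ}
    (hsum : ∑ v, a v = 0) (ha : ∀ T, ∑ v ∈ T, a v ≤ #(G.cut F T)) :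
    ∃ D ⊆ F, ∃ o, G.IsOrientation o D ∧ divergence o D = a := by
  classical
  induction F using Finset.induction_on generalizing a with
  | empty =>
    have hnonpos (v : V) : a v ≤ 0 := by simpa [cut_empty] using ha {v}
    have hzero : a = 0 := funext fun v =>
      (sum_eq_zero_iff_of_nonpos fun v _ => hnonpos v).1 hsum v (mem_univ v)
    exact ⟨∅, subset_rfl, fun e => (G.ends e).out, by simp [IsOrientation], hzero.symm⟩
  | insert e F he ih =>
    by_cases hF : ∀ T, ∑ v ∈ T, a v ≤ #(G.cut F T)
    · obtain ⟨D, hD, o, ho⟩ := ih hsum hF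
      exact ⟨D, hD.trans (subset_insert e F), o, ho⟩
    · push Not at hF
      obtain ⟨T₀, hT₀⟩ := hF
      obtain ⟨x, y, hxy, hx, hy⟩ := exists_ends_eq_of_card_cut_lt hT₀ (ha T₀)
      obtain ⟨D, hD, o, ho, hdiv⟩ := ih (a := a - (Pi.single x 1 - Pi.single y 1))
        (by simp [hsum]) (sum_sub_single_add_single_le_card_cut hxy ha hT₀ hx hy)
      refine ⟨insert e D, insert_subset_insert e hD, _, ho.insert_update hxy, ?_⟩
      rw [divergence_insert_update (fun h => he (hD h)), hdiv, add_sub_cancel]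

lemma divergence_erase [DecidableEq E] {o : E → V × V} {D : Finset E} {e : E} (he : e ∈ D) :
    divergence o (D.erase e) = divergence o D - (Pi.single (o e).1 1 - Pi.single (o e).2 1) := by
  rw [divergence, divergence, ← add_sum_erase D _ he, add_sub_cancel_left]

lemma exists_source_eq_of_divergence_pos {o : E → V × V} {D : Finset E} {v : V}
    (hpos : 0 < divergence o D v) : ∃ e ∈ D, (o e).1 = v := by
  by_contra! hne
  refine hpos.not_ge ?_
  rw [divergence, Finset.sum_apply]
  refine sum_nonpos fun e he => ?_
  rw [Pi.sub_apply, Pi.single_eq_of_ne' (hne e he), zero_sub, neg_nonpos]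
  exact (Pi.single_nonneg.2 zero_le_one : (0 : V → ℤ) ≤ Pi.single (o e).2 1) v

lemma sum_single_sub_single_pos {ι : Type*} [Fintype ι] {x : ι → V} {w : V} {i : ι}
    (hi : x i ≠ w) : 0 < (∑ j, (Pi.single (x j) 1 - Pi.single w 1) : V → ℤ) (x i) := by
  simp only [Finset.sum_apply, Pi.sub_apply, Pi.single_eq_of_ne hi, sub_zero]
  exact sum_pos' (fun j _ => (Pi.single_nonneg.2 zero_le_one : (0 : V → ℤ) ≤ _) _)
    ⟨i, mem_univ i, by simp⟩

lemma sum_single_update_sub_single {ι : Type*} [Fintype ι] [DecidableEq ι] (x : ι → V) (w y : V)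
    (i : ι) :
    (∑ j, (Pi.single (Function.update x i y j) 1 - Pi.single w 1) : V → ℤ) =
      ∑ j, (Pi.single (x j) 1 - Pi.single w 1) - (Pi.single (x i) 1 - Pi.single y 1) := by
  rw [← add_sum_erase _ _ (mem_univ i), ← add_sum_erase _ _ (mem_univ i), Function.update_self,
    sum_congr rfl fun j hj => by rw [Function.update_of_ne (ne_of_mem_erase hj)]]
  abel

theorem exists_isDisjointTrails_of_divergence_eq {ι : Type*} [Fintype ι]
    {o : E → V × V} {D : Finset E} (ho : G.IsOrientation o D) {x : ι → V} {w : V}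
    (hdiv : divergence o D = ∑ i, (Pi.single (x i) 1 - Pi.single w 1)) :
    ∃ p, G.IsDisjointTrails D x w p := by
  classical
  induction D using Finset.strongInduction generalizing x with
  | H D ih =>
  by_cases hx : ∀ i, x i = w
  · exact ⟨fun _ => [], fun i => ⟨hx i, List.nodup_nil⟩, by simp, by simp [EdgeDisjoint]⟩
  push Not at hx
  obtain ⟨i, hi⟩ := hx
  obtain ⟨e, he, hei⟩ := exists_source_eq_of_divergence_pos (hdiv ▸ sum_single_sub_single_pos hi)
  obtain ⟨p, hp⟩ := ih (D.erase e) (erase_ssubset he) (fun f hf => ho f (mem_of_mem_erase hf))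
    (x := Function.update x i (o e).2)
    (by rw [sum_single_update_sub_single, divergence_erase he, hdiv, hei])
  exact ⟨_, hp.update_cons he (hei ▸ ho e he)⟩

end Flow

section Menger

variable {V E : Type*} [Finite V] {G : Multigraph V E}

theorem menger (F : Finset E) {v w : V} {k : ℕ}
    (hcut : ∀ T, v ∈ T → w ∉ T → k ≤ #(G.cut F T)) :
    ∃ p : Fin k → List (V × E), G.IsDisjointTrails F (fun _ => v) w p := by
  have := Fintype.ofFinite V
  classical
  let a : V → ℤ := ∑ _ : Fin k, (Pi.single v 1 - Pi.single w 1)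
  have ha (T : Finset V) :
      ∑ u ∈ T, a u = k * ((if v ∈ T then 1 else 0) - if w ∈ T then 1 else 0) := by
    simp only [a, sum_const, card_fin, nsmul_eq_mul, Pi.mul_apply, Pi.natCast_apply, ← mul_sum,
      Pi.sub_apply, sum_sub_distrib, sum_single_one]
  have ha_le (T : Finset V) : ∑ u ∈ T, a u ≤ #(G.cut F T) := by
    rw [ha]
    by_cases hv : v ∈ T <;> by_cases hw : w ∈ T <;> simp [hv, hw, hcut]
  obtain ⟨D, hD, o, ho, hdiv⟩ := exists_divergence_eq_of_sum_le_card_cut F (by simp [ha]) ha_le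
  obtain ⟨p, hp⟩ := exists_isDisjointTrails_of_divergence_eq ho hdiv
  exact ⟨p, hp.isTtrail, fun he => hD (hp.mem he), hp.edgeDisjoint⟩

end Menger

section Uncrossing

variable {V : Type*} [Fintype V] [DecidableEq V]

theorem exists_pair_not_separated {d : Finset V → ℕ}
    (hsub : ∀ S T, d (S ∩ T) + d (S ∪ T) ≤ d S + d T) (hcompl : ∀ T, d Tᶜ = d T)
    (hne : ∀ T, d T ≠ 1) (huniv : d univ ≤ 2) {X : Finset V} (hX : X.Nonempty)
    (heven : ∀ T, d T ≤ 2 → Even #(T ∩ X)) :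
    ∃ v ∈ X, ∃ w ∈ X, v ≠ w ∧ ∀ T, v ∈ T → w ∉ T → 3 ≤ d T := by
  obtain ⟨S, hS, hmin⟩ := exists_min_image {S | d S ≤ 2 ∧ (S ∩ X).Nonempty} (fun S => #(S ∩ X))
    ⟨univ, by simpa [huniv] using hX⟩
  simp only [mem_filter_univ] at hS hmin
  have hcard : 1 < #(S ∩ X) := by
    have := hS.2.card_pos
    obtain ⟨n, hn⟩ := heven S hS.1
    omega
  obtain ⟨v, hv, w, hw, hvw⟩ := one_lt_card.1 hcard
  rw [mem_inter] at hv hw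
  refine ⟨v, hv.2, w, hw.2, hvw, fun T hvT hwT => ?_⟩
  by_contra! hT
  have three_le {x y : V} {T' : Finset V} (hx : x ∈ S ∧ x ∈ X) (hy : y ∈ S ∧ y ∈ X)
      (hxT : x ∈ T') (hyT : y ∉ T') : 3 ≤ d (S ∩ T') := by
    by_contra! h
    refine (hmin (S ∩ T') ⟨by omega, x, by simp [hx, hxT]⟩).not_gt (card_lt_card ?_)
    refine ⟨inter_subset_inter_right inter_subset_left, fun hsubset => hyT ?_⟩
    exact (mem_inter.1 (mem_inter.1 (hsubset (mem_inter.2 hy))).1).2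
  have hT3 := three_le hv hw hvT hwT
  have hTc3 := three_le hw hv (mem_compl.2 hwT) (by simpa using hvT)
  have hunion : (S ∪ T) ∩ (S ∪ Tᶜ) = S := by
    rw [← union_inter_distrib_left, inter_compl, union_empty]
  have h₁ := hsub S T
  have h₂ := hsub S Tᶜ
  have h₃ := hsub (S ∪ T) (S ∪ Tᶜ)
  have hne₁ := hne (S ∪ T)
  have hne₂ := hne (S ∪ Tᶜ)
  rw [hcompl] at h₂
  rw [hunion] at h₃
  omega

end Uncrossing

section Parity

variable {V : Type*}

lemma zmod_two_eq_one_of_ne_zero : ∀ {a : ZMod 2}, a ≠ 0 → a = 1 := by decide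

lemma sum_zmod_two_eq_card (B : V → ZMod 2) (T : Finset V) :
    ∑ v ∈ T, B v = #{v ∈ T | B v ≠ 0} := by
  rw [card_filter, Nat.cast_sum]
  refine sum_congr rfl fun v _ => ?_
  split_ifs with hv
  · rw [zmod_two_eq_one_of_ne_zero hv, Nat.cast_one]
  · rw [not_not.1 hv, Nat.cast_zero]

lemma card_support_add_vert_add_vert_lt [Fintype V] [DecidableEq V] {B : V → ZMod 2} {v w : V}
    (hvw : v ≠ w) (hv : B v ≠ 0) (hw : B w ≠ 0) :
    #{u | (B + (vert v + vert w)) u ≠ 0} < #{u | B u ≠ 0} := by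
  refine card_lt_card ⟨fun u hu => ?_, fun hsubset => ?_⟩
  · rw [mem_filter_univ] at hu ⊢
    contrapose! hu
    have huv : u ≠ v := fun h => hv (h ▸ hu)
    have huw : u ≠ w := fun h => hw (h ▸ hu)
    simp [vert, hu, huv, huw]
  · have hv' := hsubset ((mem_filter_univ v).2 hv)
    rw [mem_filter_univ] at hv'
    simp [vert, hvw, zmod_two_eq_one_of_ne_zero hv, CharTwo.add_self_eq_zero] at hv'

end Parity

section ThreeEdgeConnected

variable {V E : Type*} [Finite V] [DecidableEq V] {G : Multigraph V E}

theorem mem_relSpan_kConn_three {F : Finset E} (hF : ∀ T, #(G.cut F T) ≠ 1) {B : V → ZMod 2}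
    (hB : ∀ T, #(G.cut F T) ≤ 2 → ∑ v ∈ T, B v = 0) : B ∈ relSpan (G.KConn 3) := by
  have := Fintype.ofFinite V
  induction hn : #{v | B v ≠ 0} using Nat.strong_induction_on generalizing B with
  | _ n ih =>
  obtain hB0 | hB0 := ({v | B v ≠ 0} : Finset V).eq_empty_or_nonempty
  · have : B = 0 := by simpa [filter_eq_empty_iff, funext_iff] using hB0
    exact this ▸ zero_mem _
  have heven (T : Finset V) (hT : #(G.cut F T) ≤ 2) : Even #(T ∩ univ.filter (B · ≠ 0)) := by
    rw [inter_filter, inter_univ, ← ZMod.natCast_eq_zero_iff_even, ← sum_zmod_two_eq_card, hB T hT]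
  obtain ⟨v, hv, w, hw, hvw, hsep⟩ := exists_pair_not_separated
    (card_cut_inter_add_card_cut_union_le F) (fun T => by rw [cut_compl]) hF
    (by simp [cut_univ]) hB0 heven
  have hconn : G.KConn 3 v w := by
    obtain ⟨p, hp⟩ := menger F hsep
    exact .inr ⟨p, hp.isTtrail, hp.edgeDisjoint⟩
  have hpair : vert v + vert w ∈ relSpan (G.KConn 3) := vert_add_vert_mem_relSpan hconn
  have hmem_iff {T : Finset V} (hT : #(G.cut F T) ≤ 2) : v ∈ T ↔ w ∈ T := by
    have h₁ := hsep T
    have h₂ := hsep Tᶜ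
    simp only [mem_compl, cut_compl] at h₁ h₂
    grind
  rw [← add_sub_cancel_right B (vert v + vert w)]
  refine sub_mem (ih _ ?_ (fun T hT => ?_) rfl) hpair
  · rw [← hn]
    exact card_support_add_vert_add_vert_lt hvw (by simpa using hv) (by simpa using hw)
  · simp [sum_add_distrib, hB T hT, sum_vert, hmem_iff hT, CharTwo.add_self_eq_zero]

end ThreeEdgeConnected

section EdgeVector

variable {V E : Type*}

lemma zmod_two_mul_self (c : E → ZMod 2) : c * c = c := by
  ext e
  exact (by decide : ∀ a : ZMod 2, a * a = a) (c e)

variable [DecidableEq E]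

lemma eps_cons {x : V} {e : E} {p : List (V × E)} (he : e ∉ p.map Prod.snd) :
    eps ((x, e) :: p) = Pi.single e 1 + eps p := by
  ext f
  obtain rfl | hf := eq_or_ne f e
  · simp only [eps, List.map_cons, List.mem_cons, true_or, if_true, Pi.add_apply,
      Pi.single_eq_same, if_neg he, add_zero]
  · simp only [eps, List.map_cons, List.mem_cons, hf, false_or, Pi.add_apply,
      Pi.single_eq_of_ne hf, zero_add]

lemma eps_add_mul_eps_add {p q r : List (V × E)} (hpq : EdgeDisjoint p q)
    (hpr : EdgeDisjoint p r) (hqr : EdgeDisjoint q r) :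
    (eps p + eps q) * (eps p + eps r) = eps p := by
  ext e
  by_cases hp : e ∈ p.map Prod.snd
  · simp [eps, hp, hpq e hp, hpr e hp]
  · by_cases hq : e ∈ q.map Prod.snd
    · simp [eps, hp, hq, hqr e hq]
    · simp [eps, hp, hq]

end EdgeVector

section Boundary

variable {V E : Type*} [DecidableEq V] [Fintype E] {G : Multigraph V E}

lemma mem_cycleSpace {c : E → ZMod 2} : c ∈ G.cycleSpace ↔ G.boundary c = 0 :=
  LinearMap.mem_ker

lemma boundary_single [DecidableEq E] {e : E} {a b : V} (he : G.ends e = s(a, b)) :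
    G.boundary (Pi.single e 1) = vert a + vert b := by
  ext v
  simp [boundary, Pi.single_apply, edgeVec_eq he]

lemma boundary_eps [DecidableEq E] {p : List (V × E)} {x y : V} (hp : G.IsTtrail x y p) :
    G.boundary (eps p) = vert x + vert y := by
  induction p generalizing x with
  | nil =>
    obtain rfl : x = y := hp.1
    rw [ZModModule.add_self, show eps ([] : List (V × E)) = 0 by ext; simp [eps], map_zero]
  | cons ve p ih =>
    obtain ⟨v, e⟩ := ve
    obtain ⟨⟨rfl, w, he, hchain⟩, hnodup⟩ := hp
    obtain ⟨hep, hnodup⟩ := List.nodup_cons.1 hnodup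
    rw [eps_cons hep, map_add, boundary_single he, ih ⟨hchain, hnodup⟩,
      ZModModule.add_add_add_cancel]

lemma eps_add_eps_mem_cycleSpace [DecidableEq E] {p q : List (V × E)} {x y : V}
    (hp : G.IsTtrail x y p) (hq : G.IsTtrail x y q) : eps p + eps q ∈ G.cycleSpace := by
  rw [mem_cycleSpace, map_add, boundary_eps hp, boundary_eps hq, ZModModule.add_self]

lemma range_boundary : LinearMap.range G.boundary = relSpan (G.KConn 1) := by
  classical
  refine le_antisymm ?_ (Submodule.span_le.2 ?_)
  · rintro _ ⟨c, rfl⟩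
    rw [pi_eq_sum_univ' c, map_sum]
    refine sum_mem fun e _ => ?_
    obtain ⟨a, b, he⟩ := G.exists_ends_eq e
    rw [map_smul, boundary_single he]
    refine Submodule.smul_mem _ _ (vert_add_vert_mem_relSpan (.inr ⟨fun _ => [(a, e)], ?_, ?_⟩))
    · exact fun _ => ⟨⟨rfl, b, he, rfl⟩, List.nodup_singleton e⟩
    · exact fun i j hij => absurd (Subsingleton.elim i j) hij
  · rintro _ ⟨v, w, rfl | ⟨p, hp, -⟩, rfl⟩
    · rw [ZModModule.add_self]
      exact zero_mem _
    · exact ⟨eps (p 0), boundary_eps (hp 0)⟩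

end Boundary

section CycleClass

variable {V E : Type*} [DecidableEq V] [Fintype E] (G : Multigraph V E)

open scoped Classical in
/-- The edges lying on some cycle, i.e. in the support of some element of the cycle space. -/
noncomputable def nonbridges : Finset E :=
  {e | ∃ c ∈ G.cycleSpace, c e ≠ 0}

/-- Two edges are cycle-equivalent if every element of the cycle space contains both or neither;
for edges on cycles this means that no cycle separates them. -/
def CycleEquiv (e f : E) : Prop :=
  ∀ c ∈ G.cycleSpace, c e = c f

/-- The partition of the nonbridge edges into cycle-equivalence classes. -/
def cycleSetoid : Setoid {e // e ∈ G.nonbridges} where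
  r e f := G.CycleEquiv e f
  iseqv := ⟨fun _ _ _ => rfl, fun h c hc => (h c hc).symm, fun h k c hc => (h c hc).trans (k c hc)⟩

/-- The functions `E → R` which vanish on bridges and are constant on cycle-equivalence classes. -/
def cycleClassSpace (R : Type*) [CommRing R] : Submodule R (E → R) where
  carrier := {x | (∀ e ∉ G.nonbridges, x e = 0) ∧ ∀ e f, G.CycleEquiv e f → x e = x f}
  zero_mem' := ⟨fun _ _ => rfl, fun _ _ _ => rfl⟩
  add_mem' hx hy := ⟨fun e he => by simp [hx.1 e he, hy.1 e he],
    fun e f hef => by simp [hx.2 e f hef, hy.2 e f hef]⟩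
  smul_mem' r x hx := ⟨fun e he => by simp [hx.1 e he], fun e f hef => by simp [hx.2 e f hef]⟩

variable {G}

lemma mem_nonbridges {e : E} : e ∈ G.nonbridges ↔ ∃ c ∈ G.cycleSpace, c e ≠ 0 := by
  simp [nonbridges]

lemma eq_zero_of_notMem_nonbridges {c : E → ZMod 2} (hc : c ∈ G.cycleSpace) {e : E}
    (he : e ∉ G.nonbridges) : c e = 0 := by
  contrapose! he
  exact mem_nonbridges.2 ⟨c, hc, he⟩

lemma CycleEquiv.mem_nonbridges_iff {e f : E} (h : G.CycleEquiv e f) :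
    e ∈ G.nonbridges ↔ f ∈ G.nonbridges := by
  rw [mem_nonbridges, mem_nonbridges]
  exact exists_congr fun c => and_congr_right fun hc => by rw [h c hc]

lemma mul_mem_cycleClassSpace {X Y : E → ZMod 2} (hX : X ∈ G.cycleSpace)
    (hY : Y ∈ G.cycleSpace) : X * Y ∈ G.cycleClassSpace (ZMod 2) :=
  ⟨fun e he => by rw [Pi.mul_apply, eq_zero_of_notMem_nonbridges hX he, zero_mul],
    fun e f hef => by rw [Pi.mul_apply, Pi.mul_apply, hef X hX, hef Y hY]⟩

lemma cycleSpace_le_cycleClassSpace : G.cycleSpace ≤ G.cycleClassSpace (ZMod 2) := fun c hc => by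
  rw [← zmod_two_mul_self c]
  exact mul_mem_cycleClassSpace hc hc

variable (G) in
open scoped Classical in
/-- An element of the cycle-class space is a choice of a value for each class. -/
noncomputable def cycleClassSpaceEquiv (R : Type*) [CommRing R] :
    G.cycleClassSpace R ≃ₗ[R] (Quotient G.cycleSetoid → R) where
  toFun x := Quotient.lift (fun e => x.1 e.1) fun _ _ h => x.2.2 _ _ h
  map_add' x y := funext <| Quotient.ind fun e => rfl
  map_smul' r x := funext <| Quotient.ind fun e => rfl
  invFun f := ⟨fun e => if he : e ∈ G.nonbridges then f (Quotient.mk _ ⟨e, he⟩) else 0,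
    fun e he => dif_neg he, fun e e' hee' => by
      beta_reduce
      by_cases he : e ∈ G.nonbridges
      · rw [dif_pos he, dif_pos (hee'.mem_nonbridges_iff.1 he)]
        exact congrArg f (Quotient.sound hee')
      · rw [dif_neg he, dif_neg (he ∘ hee'.mem_nonbridges_iff.2)]⟩
  left_inv x := by
    ext e
    by_cases he : e ∈ G.nonbridges
    · simp [he]
    · simp [he, x.2.1 e he]
  right_inv f := funext <| Quotient.ind fun e => by simp

lemma finrank_cycleClassSpace (R : Type*) [CommRing R] [Nontrivial R] :
    Module.finrank R (G.cycleClassSpace R) = Nat.card (Quotient G.cycleSetoid) := by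
  classical
  rw [(G.cycleClassSpaceEquiv R).finrank_eq, Nat.card_eq_fintype_card,
    Module.finrank_fintype_fun_eq_card]

lemma sum_cut_nonbridges_of_mem_cycleSpace {c : E → ZMod 2} (hc : c ∈ G.cycleSpace)
    (T : Finset V) : ∑ e ∈ G.cut G.nonbridges T, c e = 0 := by
  rw [← sum_boundary fun e he => eq_zero_of_notMem_nonbridges hc he, mem_cycleSpace.1 hc]
  exact sum_const_zero

lemma card_cut_nonbridges_ne_one (T : Finset V) : #(G.cut G.nonbridges T) ≠ 1 := by
  intro hcard
  obtain ⟨e, he⟩ := card_eq_one.1 hcard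
  obtain ⟨c, hc, hce⟩ := mem_nonbridges.1 (cut_subset (he ▸ mem_singleton_self e))
  exact hce (by simpa [he] using sum_cut_nonbridges_of_mem_cycleSpace hc T)

lemma sum_cut_nonbridges_of_mem_cycleClassSpace {x : E → ZMod 2}
    (hx : x ∈ G.cycleClassSpace (ZMod 2)) {T : Finset V} (hT : #(G.cut G.nonbridges T) ≤ 2) :
    ∑ e ∈ G.cut G.nonbridges T, x e = 0 := by
  classical
  obtain hcard | hcard | hcard : #(G.cut G.nonbridges T) = 0 ∨ #(G.cut G.nonbridges T) = 1 ∨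
    #(G.cut G.nonbridges T) = 2 := by omega
  · rw [card_eq_zero.1 hcard, sum_empty]
  · exact absurd hcard (card_cut_nonbridges_ne_one T)
  · obtain ⟨e, f, hne, hef⟩ := card_eq_two.1 hcard
    have hequiv : G.CycleEquiv e f := fun c hc => CharTwo.add_eq_zero.1 <| by
      simpa [hef, sum_pair hne] using sum_cut_nonbridges_of_mem_cycleSpace hc T
    rw [hef, sum_pair hne, hx.2 e f hequiv, CharTwo.add_self_eq_zero]

lemma boundary_mem_relSpan_kConn_three [Finite V] {x : E → ZMod 2}
    (hx : x ∈ G.cycleClassSpace (ZMod 2)) : G.boundary x ∈ relSpan (G.KConn 3) :=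
  mem_relSpan_kConn_three card_cut_nonbridges_ne_one fun T hT => by
    rw [sum_boundary hx.1, sum_cut_nonbridges_of_mem_cycleClassSpace hx hT]

end CycleClass

section CycleProduct

variable {V E : Type*} [DecidableEq V] [Fintype E] {G : Multigraph V E}

variable (G) in
/-- The span of the intersections of two elements of the cycle space. -/
def cycleProductSpace : Submodule (ZMod 2) (E → ZMod 2) :=
  Submodule.span (ZMod 2) {z | ∃ X ∈ G.cycleSpace, ∃ Y ∈ G.cycleSpace, z = X * Y}

lemma cycleSpace_le_cycleProductSpace : G.cycleSpace ≤ G.cycleProductSpace := fun c hc =>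
  Submodule.subset_span ⟨c, hc, c, hc, (zmod_two_mul_self c).symm⟩

lemma cycleProductSpace_le_cycleClassSpace :
    G.cycleProductSpace ≤ G.cycleClassSpace (ZMod 2) := by
  refine Submodule.span_le.2 ?_
  rintro _ ⟨X, hX, Y, hY, rfl⟩
  exact mul_mem_cycleClassSpace hX hY

lemma relSpan_kConn_three_le_map_boundary :
    relSpan (G.KConn 3) ≤ G.cycleProductSpace.map G.boundary := by
  classical
  refine Submodule.span_le.2 ?_
  rintro _ ⟨v, w, rfl | ⟨p, hp, hdisj⟩, rfl⟩
  · rw [ZModModule.add_self]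
    exact zero_mem _
  · have hprod := eps_add_mul_eps_add (hdisj 0 1 (by decide)) (hdisj 0 2 (by decide))
      (hdisj 1 2 (by decide))
    exact ⟨eps (p 0), Submodule.subset_span ⟨_, eps_add_eps_mem_cycleSpace (hp 0) (hp 1), _,
      eps_add_eps_mem_cycleSpace (hp 0) (hp 2), hprod.symm⟩, boundary_eps (hp 0)⟩

variable [Finite V]

lemma map_boundary_cycleClassSpace :
    (G.cycleClassSpace (ZMod 2)).map G.boundary = relSpan (G.KConn 3) :=
  le_antisymm (Submodule.map_le_iff_le_comap.2 fun _ => boundary_mem_relSpan_kConn_three)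
    (relSpan_kConn_three_le_map_boundary.trans
      (Submodule.map_mono cycleProductSpace_le_cycleClassSpace))

theorem cycleClassSpace_eq_cycleProductSpace :
    G.cycleClassSpace (ZMod 2) = G.cycleProductSpace := by
  refine le_antisymm (fun x hx => ?_) cycleProductSpace_le_cycleClassSpace
  obtain ⟨z, hz, hzx⟩ := relSpan_kConn_three_le_map_boundary (boundary_mem_relSpan_kConn_three hx)
  have hsub : x - z ∈ G.cycleSpace := by rw [mem_cycleSpace, map_sub, hzx, sub_self]
  exact (Submodule.sub_mem_iff_left _ hz).1 (cycleSpace_le_cycleProductSpace hsub)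

theorem card_quotient_cycleSetoid_add_conk_three :
    Nat.card (Quotient G.cycleSetoid) + G.conk 3 = Fintype.card E + G.con := by
  classical
  have := Fintype.ofFinite V
  have hone := finrank_relSpan_add_card_quotient (G.KConn 1)
  have hthree := finrank_relSpan_add_card_quotient (G.KConn 3)
  have hE := LinearMap.finrank_range_add_finrank_ker G.boundary
  have hU := (G.boundary.domRestrict (G.cycleClassSpace (ZMod 2))).finrank_range_add_finrank_ker
  have hker : LinearMap.ker G.boundary = G.cycleSpace := rfl
  rw [hker, range_boundary, Module.finrank_fintype_fun_eq_card] at hE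
  rw [LinearMap.range_domRestrict, map_boundary_cycleClassSpace, LinearMap.ker_domRestrict, hker,
    (Submodule.comapSubtypeEquivOfLe cycleSpace_le_cycleClassSpace).finrank_eq,
    finrank_cycleClassSpace] at hU
  unfold con conk
  omega

end CycleProduct

section EdgeLift

variable {E : Type*}

/-- The `0`-`1` vector in `ℤ^E` lifting a vector in `F₂^E`. -/
def edgeLift (c : E → ZMod 2) : E → ℤ := fun e => (c e).val

lemma intCast_edgeLift (c : E → ZMod 2) (e : E) : (edgeLift c e : ZMod 2) = c e := by
  simp [edgeLift]

lemma two_smul_edgeLift_mul (X Y : E → ZMod 2) :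
    (2 : ℤ) • edgeLift (X * Y) = edgeLift X + edgeLift Y - edgeLift (X + Y) := by
  ext e
  exact (by decide : ∀ a b : ZMod 2, (2 : ℤ) * ((a * b).val : ℤ) = a.val + b.val - (a + b).val)
    (X e) (Y e)

lemma edgeLift_add_of_mul_eq_zero {X Y : E → ZMod 2} (hXY : X * Y = 0) :
    edgeLift (X + Y) = edgeLift X + edgeLift Y := by
  have hmul := two_smul_edgeLift_mul X Y
  have hzero : edgeLift (0 : E → ZMod 2) = 0 := rfl
  rw [hXY, hzero, smul_zero] at hmul
  exact (sub_eq_zero.1 hmul.symm).symm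

lemma edgeLift_single [DecidableEq E] (e : E) : edgeLift (Pi.single e 1) = Pi.single e 1 := by
  ext f
  obtain rfl | hf := eq_or_ne f e
  · simp [edgeLift, ZMod.val_one]
  · simp [edgeLift, hf]

end EdgeLift

section Sign

/-- The nontrivial character `a ↦ (-1)ᵃ` of `ZMod 2`. -/
def signChar : AddChar (ZMod 2) ℤ := AddChar.zmodChar 2 (ζ := -1) (by norm_num)

lemma signChar_mul_neg_two_mul_val (a b : ZMod 2) :
    signChar a * (-2 * (b.val : ℤ)) = signChar (a + b) - signChar a := by
  revert a b
  decide

lemma signChar_eq_one_iff {a : ZMod 2} : signChar a = 1 ↔ a = 0 := by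
  revert a
  decide

open scoped Classical in
lemma sum_signChar {C : Type*} [AddCommGroup C] [Fintype C] (φ : C →+ ZMod 2) :
    ∑ c, signChar (φ c) = if φ = 0 then (Fintype.card C : ℤ) else 0 := by
  have hφ : signChar.compAddMonoidHom φ = 0 ↔ φ = 0 := by
    simp [DFunLike.ext_iff, signChar_eq_one_iff]
  rw [← if_congr hφ rfl rfl, ← AddChar.sum_eq_ite]
  rfl

end Sign

section CycleLattice

variable {V E : Type*} [DecidableEq V] [Fintype E] {G : Multigraph V E}

variable (G) in
/-- The lattice in `ℤ^E` spanned by the edge sets of the elements of the cycle space. -/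
def cycleLattice : Submodule ℤ (E → ℤ) :=
  Submodule.span ℤ (edgeLift '' G.cycleSpace)

lemma edgeLift_mem_cycleLattice {c : E → ZMod 2} (hc : c ∈ G.cycleSpace) :
    edgeLift c ∈ G.cycleLattice :=
  Submodule.subset_span ⟨c, hc, rfl⟩

lemma two_smul_edgeLift_mul_mem_cycleLattice {X Y : E → ZMod 2} (hX : X ∈ G.cycleSpace)
    (hY : Y ∈ G.cycleSpace) : (2 : ℤ) • edgeLift (X * Y) ∈ G.cycleLattice := by
  rw [two_smul_edgeLift_mul]
  exact sub_mem (add_mem (edgeLift_mem_cycleLattice hX) (edgeLift_mem_cycleLattice hY))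
    (edgeLift_mem_cycleLattice (add_mem hX hY))

lemma comp_mem_cycleClassSpace {R S : Type*} [CommRing R] [CommRing S] {x : E → R}
    (hx : x ∈ G.cycleClassSpace R) {g : R → S} (hg : g 0 = 0) : g ∘ x ∈ G.cycleClassSpace S :=
  ⟨fun e he => by rw [Function.comp_apply, hx.1 e he, hg],
    fun e f hef => congrArg g (hx.2 e f hef)⟩

lemma edgeLift_mem_cycleClassSpace {c : E → ZMod 2} (hc : c ∈ G.cycleClassSpace (ZMod 2)) :
    edgeLift c ∈ G.cycleClassSpace ℤ :=
  comp_mem_cycleClassSpace (g := fun a => (a.val : ℤ)) hc rfl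

lemma exists_eq_two_smul_of_mem_cycleClassSpace {x : E → ℤ} (hx : x ∈ G.cycleClassSpace ℤ)
    (hcast : ∀ e, (x e : ZMod 2) = 0) : ∃ z ∈ G.cycleClassSpace ℤ, x = (2 : ℤ) • z := by
  refine ⟨_, comp_mem_cycleClassSpace hx (g := (· / 2)) (Int.zero_ediv 2), funext fun e => ?_⟩
  exact (Int.mul_ediv_cancel' ((ZMod.intCast_zmod_eq_zero_iff_dvd (x e) 2).1 (hcast e))).symm

lemma exists_intCast_eq_of_mem_cycleProductSpace {c : E → ZMod 2}
    (hc : c ∈ G.cycleProductSpace) :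
    ∃ y ∈ G.cycleClassSpace ℤ, (2 : ℤ) • y ∈ G.cycleLattice ∧ ∀ e, (y e : ZMod 2) = c e := by
  induction hc using Submodule.span_induction with
  | mem c hc =>
    obtain ⟨X, hX, Y, hY, rfl⟩ := hc
    exact ⟨_, edgeLift_mem_cycleClassSpace (mul_mem_cycleClassSpace hX hY),
      two_smul_edgeLift_mul_mem_cycleLattice hX hY, intCast_edgeLift _⟩
  | zero => exact ⟨0, zero_mem _, by simp, by simp⟩
  | add a b _ _ iha ihb =>
    obtain ⟨x, hxU, hx, hxa⟩ := iha
    obtain ⟨y, hyU, hy, hyb⟩ := ihb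
    exact ⟨x + y, add_mem hxU hyU, smul_add (2 : ℤ) x y ▸ add_mem hx hy, by simp [hxa, hyb]⟩
  | smul r a _ iha =>
    obtain ⟨x, hxU, hx, hxa⟩ := iha
    refine ⟨(r.val : ℤ) • x, Submodule.smul_mem _ _ hxU, ?_, by simp [hxa]⟩
    rw [smul_comm]
    exact Submodule.smul_mem _ _ hx

lemma exists_eq_add_two_smul [Finite V] {x : E → ℤ} (hx : x ∈ G.cycleClassSpace ℤ) :
    ∃ y, (2 : ℤ) • y ∈ G.cycleLattice ∧ ∃ z ∈ G.cycleClassSpace ℤ, x = y + (2 : ℤ) • z := by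
  have hcast := comp_mem_cycleClassSpace hx (g := ((↑) : ℤ → ZMod 2)) Int.cast_zero
  rw [cycleClassSpace_eq_cycleProductSpace] at hcast
  obtain ⟨y, hyU, hy, hyx⟩ := exists_intCast_eq_of_mem_cycleProductSpace hcast
  obtain ⟨z, hz, hxy⟩ := exists_eq_two_smul_of_mem_cycleClassSpace (sub_mem hx hyU)
    fun e => by simp [hyx]
  exact ⟨y, hy, z, hz, by rw [← hxy, add_sub_cancel]⟩

open scoped Classical in
lemma sum_signChar_mul_edgeLift {e : E} (he : e ∈ G.nonbridges) (f : E) :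
    ∑ c : G.cycleSpace, signChar (c.1 e) * (-2 * edgeLift c.1 f) =
      if G.CycleEquiv e f then (Fintype.card G.cycleSpace : ℤ) else 0 := by
  let eval (e : E) : G.cycleSpace →+ ZMod 2 :=
    (Pi.evalAddMonoidHom _ e).comp G.cycleSpace.toAddSubgroup.subtype
  have hadd : eval e + eval f = 0 ↔ G.CycleEquiv e f := by
    simp only [DFunLike.ext_iff, AddMonoidHom.add_apply, AddMonoidHom.zero_apply,
      CharTwo.add_eq_zero, Subtype.forall]
    rfl
  have hne : eval e ≠ 0 := by
    obtain ⟨c, hc, hce⟩ := mem_nonbridges.1 he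
    exact fun h => hce (DFunLike.congr_fun h ⟨c, hc⟩)
  calc ∑ c : G.cycleSpace, signChar (c.1 e) * (-2 * edgeLift c.1 f)
      = ∑ c, signChar ((eval e + eval f) c) - ∑ c, signChar (eval e c) := by
        rw [← sum_sub_distrib]
        exact sum_congr rfl fun c _ => signChar_mul_neg_two_mul_val (c.1 e) (c.1 f)
    _ = _ := by simp only [sum_signChar, hadd, hne, if_false, sub_zero]

open scoped Classical in
lemma sum_quotient_mul_ite_cycleEquiv {x : E → ℤ} (hx : x ∈ G.cycleClassSpace ℤ) (n : ℤ) (f : E) :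
    ∑ q : Quotient G.cycleSetoid, x q.out * (if G.CycleEquiv q.out f then n else 0) = n * x f := by
  by_cases hf : f ∈ G.nonbridges
  · have hout : G.CycleEquiv (Quotient.mk G.cycleSetoid ⟨f, hf⟩).out f :=
      Quotient.mk_out (s := G.cycleSetoid) _
    rw [sum_eq_single_of_mem _ (mem_univ (Quotient.mk G.cycleSetoid ⟨f, hf⟩)), if_pos hout,
      hx.2 _ f hout, mul_comm]
    refine fun q _ hq => ?_
    rw [if_neg, mul_zero]
    exact fun h => hq (q.out_eq.symm.trans (Quotient.sound h))
  · rw [hx.1 f hf, mul_zero]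
    refine sum_eq_zero fun q _ => ?_
    rw [if_neg fun h => hf (h.mem_nonbridges_iff.1 q.out.2), mul_zero]

open scoped Classical in
lemma card_smul_eq_sum_edgeLift {x : E → ℤ} (hx : x ∈ G.cycleClassSpace ℤ) :
    (Fintype.card G.cycleSpace : ℤ) • x = ∑ c : G.cycleSpace,
      (∑ q : Quotient G.cycleSetoid, x q.out * signChar (c.1 q.out) * -2) • edgeLift c.1 := by
  ext f
  calc ((Fintype.card G.cycleSpace : ℤ) • x) f
      = ∑ q : Quotient G.cycleSetoid, x q.out *
          ∑ c : G.cycleSpace, signChar (c.1 q.out) * (-2 * edgeLift c.1 f) := by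
        simp only [sum_signChar_mul_edgeLift (Subtype.prop _), sum_quotient_mul_ite_cycleEquiv hx,
          Pi.smul_apply, smul_eq_mul]
    _ = _ := by
        simp only [mul_sum, Finset.sum_apply, Pi.smul_apply, smul_eq_mul, sum_mul, mul_assoc]
        exact sum_comm

lemma pow_finrank_smul_mem_cycleLattice {x : E → ℤ} (hx : x ∈ G.cycleClassSpace ℤ) :
    (2 : ℤ) ^ Module.finrank (ZMod 2) G.cycleSpace • x ∈ G.cycleLattice := by
  classical
  have hcard : (Fintype.card G.cycleSpace : ℤ) = 2 ^ Module.finrank (ZMod 2) G.cycleSpace := by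
    rw [Module.card_eq_pow_finrank (K := ZMod 2), ZMod.card]
    norm_cast
  rw [← hcard, card_smul_eq_sum_edgeLift hx]
  exact sum_mem fun c _ => Submodule.smul_mem _ _ (edgeLift_mem_cycleLattice c.2)

variable [Finite V]

theorem two_smul_mem_cycleLattice {x : E → ℤ} (hx : x ∈ G.cycleClassSpace ℤ) :
    (2 : ℤ) • x ∈ G.cycleLattice :=
  le_of_le_sup_smul_of_pow_smul_mem (N := G.cycleLattice.comap (LinearMap.lsmul ℤ _ 2)) 2
    (Module.finrank (ZMod 2) G.cycleSpace) (fun _ => exists_eq_add_two_smul)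
    (fun _ hx => G.cycleLattice.smul_mem 2 (pow_finrank_smul_mem_cycleLattice hx)) hx

theorem mem_cycleLattice_of_intCast_mem_cycleSpace {x : E → ℤ} (hx : x ∈ G.cycleClassSpace ℤ)
    (hcast : (fun e => (x e : ZMod 2)) ∈ G.cycleSpace) : x ∈ G.cycleLattice := by
  have hlift := edgeLift_mem_cycleClassSpace (cycleSpace_le_cycleClassSpace hcast)
  obtain ⟨z, hz, hxz⟩ := exists_eq_two_smul_of_mem_cycleClassSpace (sub_mem hx hlift)
    fun e => by simp [intCast_edgeLift]
  rw [← sub_add_cancel x, hxz]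
  exact add_mem (two_smul_mem_cycleLattice hz) (edgeLift_mem_cycleLattice hcast)

end CycleLattice

section ClosedTrail

variable {V E : Type*} [DecidableEq V] [Finite V] [Fintype E] {G : Multigraph V E}

lemma exists_isTtrail_of_mem_cycleSpace {Z : E → ZMod 2} (hZ : Z ∈ G.cycleSpace) {e : E}
    (he : Z e ≠ 0) : ∃ x p, G.IsTtrail x x p ∧ e ∈ p.map Prod.snd ∧
      ∀ f ∈ p.map Prod.snd, Z f ≠ 0 := by
  classical
  obtain ⟨a, b, hab⟩ := G.exists_ends_eq e
  let c := Z + Pi.single e 1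
  have hce : c e = 0 := by
    simp only [c, Pi.add_apply, Pi.single_eq_same, zmod_two_eq_one_of_ne_zero he]
    exact CharTwo.add_self_eq_zero 1
  have hcf {f : E} (hf : c f ≠ 0) : Z f ≠ 0 := by
    have hne : f ≠ e := fun h => hf (h ▸ hce)
    simpa [c, hne] using hf
  have hboundary : G.boundary c = vert a + vert b := by
    rw [map_add, mem_cycleSpace.1 hZ, zero_add, boundary_single hab]
  have hcut (T : Finset V) (hb : b ∈ T) (ha : a ∉ T) :
      1 ≤ #(G.cut ({f | c f ≠ 0} : Finset E) T) := by
    have hsum := sum_boundary (G := G) (F := {f | c f ≠ 0}) (c := c) (by simp) T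
    rw [Nat.one_le_iff_ne_zero, Ne, card_eq_zero]
    intro hempty
    simp [hboundary, sum_add_distrib, sum_vert, ha, hb, hempty] at hsum
  obtain ⟨p, hp⟩ := menger _ hcut
  have hmem {f : E} (hf : f ∈ (p 0).map Prod.snd) : c f ≠ 0 := (mem_filter.1 (hp.mem hf)).2
  refine ⟨a, (a, e) :: p 0, (hp.isTtrail 0).cons hab fun h => hmem h hce, by simp, ?_⟩
  rw [List.map_cons, List.forall_mem_cons]
  exact ⟨he, fun f hf => hcf (hmem hf)⟩

end ClosedTrail

section Degree

variable {V E : Type*} [DecidableEq V] [Fintype E] {G : Multigraph V E}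

variable (G) in
/-- The degree map `ℤ^E → ℤ^V`, sending each edge to the sum of its two ends (so a loop contributes
`2`); an integral version of `boundary`. -/
def degree : (E → ℤ) →ₗ[ℤ] (V → ℤ) :=
  Fintype.linearCombination ℤ fun e =>
    Sym2.lift ⟨fun a b => Pi.single a 1 + Pi.single b 1, fun _ _ => add_comm _ _⟩ (G.ends e)

lemma degree_single [DecidableEq E] {e : E} {a b : V} (he : G.ends e = s(a, b)) :
    G.degree (Pi.single e 1) = Pi.single a 1 + Pi.single b 1 := by
  rw [degree, Fintype.linearCombination_apply_single, he, Sym2.lift_mk, one_smul]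

lemma intCast_degree (x : E → ℤ) (v : V) :
    (G.degree x v : ZMod 2) = G.boundary (fun e => (x e : ZMod 2)) v := by
  simp only [degree, Fintype.linearCombination_apply, Finset.sum_apply, Pi.smul_apply, smul_eq_mul,
    Int.cast_sum, Int.cast_mul, boundary, LinearMap.coe_mk, AddHom.coe_mk]
  refine sum_congr rfl fun e _ => ?_
  obtain ⟨a, b, he⟩ := G.exists_ends_eq e
  simp [he, edgeVec_eq he, vert_eq_single, Pi.single_apply]

lemma eq_of_comp_inr_eq {l m : V ⊕ E → ℤ} (hl : (2 : ℤ) • l ∘ Sum.inl = G.degree (l ∘ Sum.inr))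
    (hm : (2 : ℤ) • m ∘ Sum.inl = G.degree (m ∘ Sum.inr)) (hlm : l ∘ Sum.inr = m ∘ Sum.inr) :
    l = m := by
  have hV : l ∘ Sum.inl = m ∘ Sum.inl :=
    smul_right_injective _ (two_ne_zero (α := ℤ)) (hl.trans (hlm ▸ hm.symm))
  rw [← Sum.elim_comp_inl_inr l, hV, hlm, Sum.elim_comp_inl_inr]

variable (G) in
/-- The linear map `y ↦ (degree y, 2y)` from `ℤ^E` to `ℤ^(V ∪ E)`, which embeds the
cycle-class lattice into the trail lattice. -/
def degreeTwice : (E → ℤ) →ₗ[ℤ] (V ⊕ E → ℤ) :=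
  (LinearEquiv.sumArrowLequivProdArrow V E ℤ ℤ).symm.toLinearMap ∘ₗ
    G.degree.prod ((2 : ℤ) • LinearMap.id)

end Degree

section TrailVector

variable {V E : Type*} [DecidableEq V] [DecidableEq E]

/-- The vector in `ℤ^(V ∪ E)` counting how often a ttrail visits each vertex and each edge. -/
def trailVec (p : List (V × E)) : V ⊕ E → ℤ :=
  (p.map fun ve => Pi.single (Sum.inl ve.1) 1 + Pi.single (Sum.inr ve.2) 1).sum

lemma trailVec_cons (ve : V × E) (p : List (V × E)) :
    trailVec (ve :: p) =
      Pi.single (Sum.inl ve.1) 1 + Pi.single (Sum.inr ve.2) 1 + trailVec p := by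
  simp [trailVec]

lemma trailVec_cons_comp_inl (ve : V × E) (p : List (V × E)) :
    trailVec (ve :: p) ∘ Sum.inl = Pi.single ve.1 1 + trailVec p ∘ Sum.inl := by
  ext v
  simp [trailVec_cons, Pi.single_apply]

lemma trailVec_cons_comp_inr (ve : V × E) (p : List (V × E)) :
    trailVec (ve :: p) ∘ Sum.inr = Pi.single ve.2 1 + trailVec p ∘ Sum.inr := by
  ext e
  simp [trailVec_cons, Pi.single_apply]

lemma sum_trailVec_smul [Fintype V] [Fintype E] {A : Type*} [AddCommGroup A] (h : V ⊕ E → A)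
    (p : List (V × E)) : ∑ i, trailVec p i • h i = wSum h p := by
  induction p with
  | nil => simp [trailVec, wSum]
  | cons ve p ih =>
    simp only [trailVec_cons, wSum_cons, ← ih, Pi.add_apply, add_smul, sum_add_distrib]
    simp [Pi.single_apply]

lemma trailVec_comp_inr {p : List (V × E)} (hp : (p.map Prod.snd).Nodup) :
    trailVec p ∘ Sum.inr = edgeLift (eps p) := by
  induction p with
  | nil => ext e; simp [trailVec, edgeLift, eps]
  | cons ve p ih =>
    obtain ⟨hep, hp⟩ := List.nodup_cons.1 hp
    have hmul : Pi.single ve.2 1 * eps p = 0 := by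
      rw [← Pi.single_mul_left, eps, if_neg hep, mul_zero, Pi.single_zero]
    rw [trailVec_cons_comp_inr, ih hp, eps_cons hep, edgeLift_add_of_mul_eq_zero hmul,
      edgeLift_single]

lemma two_smul_trailVec_comp_inl_add [Fintype E] {G : Multigraph V E} {p : List (V × E)}
    {x y : V} (hp : G.IsChain x y p) :
    (2 : ℤ) • trailVec p ∘ Sum.inl + Pi.single y 1 =
      G.degree (trailVec p ∘ Sum.inr) + Pi.single x 1 := by
  induction p generalizing x with
  | nil =>
    obtain rfl : x = y := hp
    have hinl : trailVec ([] : List (V × E)) ∘ Sum.inl = 0 := rfl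
    have hinr : trailVec ([] : List (V × E)) ∘ Sum.inr = 0 := rfl
    rw [hinl, hinr, smul_zero, map_zero]
  | cons ve p ih =>
    obtain ⟨v, e⟩ := ve
    obtain ⟨rfl, w, he, hchain⟩ := hp
    rw [trailVec_cons_comp_inl, trailVec_cons_comp_inr, map_add, degree_single he, smul_add,
      add_assoc, ih hchain]
    module

end TrailVector

section TrailLattice

variable {V E : Type*} [DecidableEq V] [DecidableEq E] {G : Multigraph V E}

variable (G) in
/-- The lattice in `ℤ^(V ∪ E)` spanned by the closed ttrails. -/
def trailLattice : Submodule ℤ (V ⊕ E → ℤ) :=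
  Submodule.span ℤ {l | ∃ x p, G.IsTtrail x x p ∧ l = trailVec p}

lemma trailVec_mem_trailLattice {x : V} {p : List (V × E)} (hp : G.IsTtrail x x p) :
    trailVec p ∈ G.trailLattice :=
  Submodule.subset_span ⟨x, p, hp, rfl⟩

theorem wgroup_eq_orthogonal_trailLattice [Fintype V] [Fintype E] (A : Type*)
    [AddCommGroup A] :
    G.Wgroup A = orthogonal A G.trailLattice := by
  ext h
  rw [mem_orthogonal]
  refine ⟨fun hh l hl => ?_, fun hh x p hp => ?_⟩
  · induction hl using Submodule.span_induction with
    | mem l hl =>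
      obtain ⟨x, p, hp, rfl⟩ := hl
      rw [sum_trailVec_smul, hh x p hp]
    | zero => simp
    | add a b _ _ iha ihb => simp [add_smul, sum_add_distrib, iha, ihb]
    | smul r a _ iha => simp [mul_smul, ← smul_sum, iha]
  · rw [← sum_trailVec_smul, hh _ (trailVec_mem_trailLattice hp)]

variable [Fintype E]

lemma eps_mem_cycleSpace {x : V} {p : List (V × E)} (hp : G.IsTtrail x x p) :
    eps p ∈ G.cycleSpace := by
  rw [mem_cycleSpace, boundary_eps hp, ZModModule.add_self]

lemma comp_inr_mem_cycleClassSpace {l : V ⊕ E → ℤ} (hl : l ∈ G.trailLattice) :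
    l ∘ Sum.inr ∈ G.cycleClassSpace ℤ := by
  suffices h : G.trailLattice ≤ (G.cycleClassSpace ℤ).comap (LinearMap.funLeft ℤ ℤ Sum.inr) from
    h hl
  refine Submodule.span_le.2 ?_
  rintro _ ⟨x, p, hp, rfl⟩
  change trailVec p ∘ Sum.inr ∈ G.cycleClassSpace ℤ
  rw [trailVec_comp_inr hp.2]
  exact edgeLift_mem_cycleClassSpace (cycleSpace_le_cycleClassSpace (eps_mem_cycleSpace hp))

lemma two_smul_comp_inl_eq_degree {l : V ⊕ E → ℤ} (hl : l ∈ G.trailLattice) :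
    (2 : ℤ) • l ∘ Sum.inl = G.degree (l ∘ Sum.inr) := by
  suffices h : G.trailLattice ≤ LinearMap.eqLocus ((2 : ℤ) • LinearMap.funLeft ℤ ℤ Sum.inl)
    (G.degree ∘ₗ LinearMap.funLeft ℤ ℤ Sum.inr) from h hl
  refine Submodule.span_le.2 ?_
  rintro _ ⟨x, p, hp, rfl⟩
  exact add_right_cancel (two_smul_trailVec_comp_inl_add hp.1)

variable [Finite V]

lemma exists_mem_trailLattice_comp_inr_eq_edgeLift {Z : E → ZMod 2} (hZ : Z ∈ G.cycleSpace) :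
    ∃ l ∈ G.trailLattice, l ∘ Sum.inr = edgeLift Z := by
  induction hn : #{e | Z e ≠ 0} using Nat.strong_induction_on generalizing Z with
  | _ n ih =>
    by_cases h0 : Z = 0
    · exact ⟨0, zero_mem _, by rw [h0]; rfl⟩
    obtain ⟨e, he⟩ := Function.ne_iff.1 h0
    obtain ⟨x, p, hp, hep, hpZ⟩ := exists_isTtrail_of_mem_cycleSpace hZ he
    have hvanish {f : E} (hf : f ∈ p.map Prod.snd) : (Z + eps p) f = 0 := by
      simp only [Pi.add_apply, zmod_two_eq_one_of_ne_zero (hpZ f hf), eps, if_pos hf]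
      exact CharTwo.add_self_eq_zero 1
    have heps {f : E} (hf : f ∉ p.map Prod.snd) : eps p f = 0 := if_neg hf
    have hlt : #{f | (Z + eps p) f ≠ 0} < n := by
      rw [← hn]
      refine card_lt_card ⟨fun f hf => ?_, fun hsubset => ?_⟩
      · rw [mem_filter_univ] at hf ⊢
        simpa [heps fun h => hf (hvanish h)] using hf
      · exact (mem_filter_univ _).1 (hsubset ((mem_filter_univ _).2 he)) (hvanish hep)
    obtain ⟨l, hl, hlE⟩ := ih _ hlt (add_mem hZ (eps_mem_cycleSpace hp)) rfl
    have hmul : (Z + eps p) * eps p = 0 := by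
      ext f
      by_cases hf : f ∈ p.map Prod.snd
      · rw [Pi.mul_apply, hvanish hf, zero_mul, Pi.zero_apply]
      · rw [Pi.mul_apply, heps hf, mul_zero, Pi.zero_apply]
    refine ⟨l + trailVec p, add_mem hl (trailVec_mem_trailLattice hp), ?_⟩
    rw [Pi.add_comp, hlE, trailVec_comp_inr hp.2, ← edgeLift_add_of_mul_eq_zero hmul, add_assoc,
      ZModModule.add_self, add_zero]

theorem mem_trailLattice_iff {l : V ⊕ E → ℤ} :
    l ∈ G.trailLattice ↔
      l ∘ Sum.inr ∈ G.cycleClassSpace ℤ ∧ (2 : ℤ) • l ∘ Sum.inl = G.degree (l ∘ Sum.inr) := by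
  refine ⟨fun hl => ⟨comp_inr_mem_cycleClassSpace hl, two_smul_comp_inl_eq_degree hl⟩, ?_⟩
  rintro ⟨hE, hV⟩
  have hcast : (fun e => ((l ∘ Sum.inr) e : ZMod 2)) ∈ G.cycleSpace := by
    rw [mem_cycleSpace]
    ext v
    rw [← intCast_degree, ← hV, Pi.smul_apply, smul_eq_mul, Int.cast_mul,
      show ((2 : ℤ) : ZMod 2) = 0 from rfl, zero_mul, Pi.zero_apply]
  have hle : G.cycleLattice ≤ G.trailLattice.map (LinearMap.funLeft ℤ ℤ Sum.inr) := by
    refine Submodule.span_le.2 ?_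
    rintro _ ⟨Z, hZ, rfl⟩
    exact exists_mem_trailLattice_comp_inr_eq_edgeLift hZ
  obtain ⟨m, hm, hmE : m ∘ Sum.inr = l ∘ Sum.inr⟩ :=
    hle (mem_cycleLattice_of_intCast_mem_cycleSpace hE hcast)
  rwa [← eq_of_comp_inr_eq (two_smul_comp_inl_eq_degree hm) hV hmE]

lemma degreeTwice_mem_trailLattice {y : E → ℤ} (hy : y ∈ G.cycleClassSpace ℤ) :
    G.degreeTwice y ∈ G.trailLattice :=
  mem_trailLattice_iff.2 ⟨Submodule.smul_mem _ (2 : ℤ) hy, (map_smul G.degree (2 : ℤ) y).symm⟩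

theorem finrank_trailLattice :
    Module.finrank ℤ G.trailLattice = Nat.card (Quotient G.cycleSetoid) := by
  rw [← finrank_cycleClassSpace ℤ]
  refine le_antisymm ?_ ?_
  · refine LinearMap.finrank_le_finrank_of_injective (f := (LinearMap.funLeft ℤ ℤ Sum.inr).restrict
      fun l => comp_inr_mem_cycleClassSpace) fun l m hlm => Subtype.ext ?_
    exact eq_of_comp_inr_eq (two_smul_comp_inl_eq_degree l.2) (two_smul_comp_inl_eq_degree m.2)
      (congrArg Subtype.val hlm)
  · refine LinearMap.finrank_le_finrank_of_injective (f := G.degreeTwice.restrict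
      fun y => degreeTwice_mem_trailLattice) fun y z hyz => Subtype.ext ?_
    exact smul_right_injective _ (two_ne_zero (α := ℤ)) (congrArg (·.1 ∘ Sum.inr) hyz)

end TrailLattice

section Saturated

variable {V E : Type*} [DecidableEq V] [DecidableEq E] [Finite V] [Finite E] {G : Multigraph V E}

theorem mem_trailLattice_of_smul_mem (n : ℤ) (l : V ⊕ E → ℤ) (hn : n ≠ 0)
    (hl : n • l ∈ G.trailLattice) : l ∈ G.trailLattice := by
  have := Fintype.ofFinite E
  rw [mem_trailLattice_iff, Pi.smul_comp, Pi.smul_comp, map_smul, smul_comm] at hl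
  obtain ⟨⟨hbridge, hclass⟩, hdegree⟩ := hl
  refine mem_trailLattice_iff.2 ⟨⟨fun e he => ?_, fun e f hef => ?_⟩, ?_⟩
  · exact (smul_eq_zero.1 (hbridge e he)).resolve_left hn
  · exact smul_right_injective _ hn (hclass e f hef)
  · exact smul_right_injective _ hn hdegree

end Saturated

theorem stmt18 (G : Multigraph V E) (A : Type*) [AddCommGroup A] :
    Nonempty ((G.Wgroup A) ≃+ (Fin (Fintype.card V + G.conk 3 - G.con) → A)) := by
  have hrank : Fintype.card (V ⊕ E) - Module.finrank ℤ G.trailLattice =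
      Fintype.card V + G.conk 3 - G.con := by
    have hclasses := card_quotient_cycleSetoid_add_conk_three (G := G)
    rw [finrank_trailLattice, Fintype.card_sum]
    omega
  rw [wgroup_eq_orthogonal_trailLattice, ← hrank]
  exact nonempty_orthogonal_equiv A mem_trailLattice_of_smul_mem

end Multigraph
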